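/- arXiv:1812.00256 — 8 statements merged into one kernel-verified Lean document; each statement's English description precedes it below -/
import Mathlib

section
/- Let R be a commutative ring and let S be a commutative R-algebra which is finite and free as an R-module. For every R-module M, the map can : Hom_R(S, R) ⊗_S (M ⊗_R S) → Hom_R(S, M) determined on elementary tensors by can(α ⊗ (m ⊗ t)) = (s ↦ α(s·t) • m) is a well-defined isomorphism of S-modules. -/
open scoped TensorProduct

section DomAction

variable (R S : Type*) [CommRing R] [CommRing S] [Algebra R S]
variable (M : Type*) [AddCommGroup M] [Module R M]

/-- The `S`-module structure on `Hom_R(S, M)` given by `(s • φ) t = φ (s * t)`. -/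
noncomputable instance instModuleHomDom : Module S (S →ₗ[R] M) where
  smul s φ :=
    { toFun := fun t => φ (s * t)
      map_add' := fun t u => by
        show φ (s * (t + u)) = φ (s * t) + φ (s * u)
        rw [mul_add, map_add]
      map_smul' := fun r t => by
        show φ (s * (r • t)) = r • φ (s * t)
        rw [mul_smul_comm, map_smul] }
  one_smul φ := LinearMap.ext fun t => by show φ (1 * t) = φ t; rw [one_mul]
  mul_smul s u φ := LinearMap.ext fun t => by
    show φ (s * u * t) = φ (u * (s * t)); rw [mul_comm s u, mul_assoc]
  smul_zero s := LinearMap.ext fun t => rfl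
  smul_add s φ ψ := LinearMap.ext fun t => rfl
  add_smul s u φ := LinearMap.ext fun t => by
    show φ ((s + u) * t) = φ (s * t) + φ (u * t); rw [add_mul, map_add]
  zero_smul φ := LinearMap.ext fun t => by show φ (0 * t) = 0; rw [zero_mul, map_zero]

/-- Left multiplication by `s : S`, as an `R`-linear endomorphism of `S`. -/
def mulLin (s : S) : S →ₗ[R] S where
  toFun t := s * t
  map_add' := mul_add s
  map_smul' r t := by rw [RingHom.id_apply]; exact mul_smul_comm r s t

@[simp] lemma mulLin_apply (s t : S) : mulLin R S s t = s * t := rfl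

/-- The `S`-module structure on `M ⊗[R] S` through the right tensor factor. -/
noncomputable instance instModuleTensorRight : Module S (M ⊗[R] S) where
  smul s x := TensorProduct.map LinearMap.id (mulLin R S s) x
  one_smul x := by
    show TensorProduct.map LinearMap.id (mulLin R S 1) x = x
    induction x using TensorProduct.induction_on with
    | zero => simp
    | tmul m t => simp
    | add a b ha hb => simp only [map_add, ha, hb]
  mul_smul s u x := by
    show TensorProduct.map LinearMap.id (mulLin R S (s * u)) x
        = TensorProduct.map LinearMap.id (mulLin R S s)
            (TensorProduct.map LinearMap.id (mulLin R S u) x)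
    induction x using TensorProduct.induction_on with
    | zero => simp
    | tmul m t => simp [mul_assoc]
    | add a b ha hb => simp only [map_add, ha, hb]
  smul_zero s := by
    show TensorProduct.map LinearMap.id (mulLin R S s) 0 = 0
    simp
  smul_add s x y := by
    show TensorProduct.map LinearMap.id (mulLin R S s) (x + y)
        = TensorProduct.map LinearMap.id (mulLin R S s) x
          + TensorProduct.map LinearMap.id (mulLin R S s) y
    simp
  add_smul s u x := by
    show TensorProduct.map LinearMap.id (mulLin R S (s + u)) x
        = TensorProduct.map LinearMap.id (mulLin R S s) x
          + TensorProduct.map LinearMap.id (mulLin R S u) x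
    induction x using TensorProduct.induction_on with
    | zero => simp
    | tmul m t => simp [add_mul, TensorProduct.tmul_add]
    | add a b ha hb => simp only [map_add, ha, hb]; abel
  zero_smul x := by
    show TensorProduct.map LinearMap.id (mulLin R S 0) x = 0
    induction x using TensorProduct.induction_on with
    | zero => simp
    | tmul m t => simp
    | add a b ha hb => simp only [map_add, ha, hb]; simp

end DomAction

section Helpers

variable (R S : Type*) [CommRing R] [CommRing S] [Algebra R S]
variable (M : Type*) [AddCommGroup M] [Module R M]

lemma homDom_smul_apply (s : S) (φ : S →ₗ[R] M) (t : S) : (s • φ) t = φ (s * t) := rfl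

lemma tensorRight_smul_tmul (s : S) (m : M) (t : S) :
    s • (m ⊗ₜ[R] t) = m ⊗ₜ[R] (s * t) := rfl

/-- For fixed `α`, the `R`-linear map `m ⊗ t ↦ (s ↦ α (s * t) • m)`. -/
noncomputable def canAux (α : S →ₗ[R] R) : M ⊗[R] S →ₗ[R] (S →ₗ[R] M) :=
  TensorProduct.lift (LinearMap.mk₂ R
    (fun m t => (LinearMap.toSpanSingleton R M m).comp (α.comp (mulLin R S t)))
    (fun m m' t => by ext s; simp)
    (fun r m t => by ext s; exact smul_comm _ _ _)
    (fun m t t' => by ext s; simp [add_mul, add_smul])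
    (fun r m t => by ext s; simp [mul_smul]))

lemma canAux_tmul (α : S →ₗ[R] R) (m : M) (t s : S) :
    canAux R S M α (m ⊗ₜ[R] t) s = α (s * t) • m := by
  rw [mul_comm]; rfl

lemma canAux_smul (α : S →ₗ[R] R) (u : S) (x : M ⊗[R] S) :
    canAux R S M α (u • x) = u • canAux R S M α x := by
  induction x using TensorProduct.induction_on with
  | zero => simp only [smul_zero, map_zero]
  | tmul m t =>
    ext s
    rw [tensorRight_smul_tmul, homDom_smul_apply, canAux_tmul, canAux_tmul]
    congr 2; ring
  | add a b ha hb => simp only [smul_add, map_add, ha, hb]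

lemma canAux_add_left (α β : S →ₗ[R] R) (x : M ⊗[R] S) :
    canAux R S M (α + β) x = canAux R S M α x + canAux R S M β x := by
  induction x using TensorProduct.induction_on with
  | zero => simp only [map_zero, add_zero]
  | tmul m t =>
    ext s
    rw [LinearMap.add_apply, canAux_tmul, canAux_tmul, canAux_tmul, LinearMap.add_apply, add_smul]
  | add a b ha hb => simp only [map_add, ha, hb]; abel

lemma canAux_smul_left (α : S →ₗ[R] R) (u : S) (x : M ⊗[R] S) :
    canAux R S M (u • α) x = u • canAux R S M α x := by
  induction x using TensorProduct.induction_on with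
  | zero => simp only [smul_zero, map_zero]
  | tmul m t =>
    ext s
    rw [homDom_smul_apply, canAux_tmul, canAux_tmul, homDom_smul_apply, mul_assoc]
  | add a b ha hb => simp only [smul_add, map_add, ha, hb]

/-- The map `can`. -/
noncomputable def canMap : ((S →ₗ[R] R) ⊗[S] (M ⊗[R] S)) →ₗ[S] (S →ₗ[R] M) :=
  TensorProduct.lift (LinearMap.mk₂ S (fun α x => canAux R S M α x)
    (canAux_add_left R S M) (fun u α x => canAux_smul_left R S M α u x)
    (fun α x y => map_add _ x y) (fun u α x => canAux_smul R S M α u x))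

lemma canMap_tmul (α : S →ₗ[R] R) (m : M) (t s : S) :
    canMap R S M (α ⊗ₜ[S] (m ⊗ₜ[R] t)) s = α (s * t) • m :=
  canAux_tmul R S M α m t s

/-- The inverse of `can`, in terms of a basis and its dual basis. -/
noncomputable def canInv {ι : Type*} [Fintype ι] (b : Module.Basis ι R S) (φ : S →ₗ[R] M) :
    (S →ₗ[R] R) ⊗[S] (M ⊗[R] S) :=
  ∑ i, (b.coord i) ⊗ₜ[S] (φ (b i) ⊗ₜ[R] (1 : S))

lemma canInv_add {ι : Type*} [Fintype ι] (b : Module.Basis ι R S) (φ ψ : S →ₗ[R] M) :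
    canInv R S M b (φ + ψ) = canInv R S M b φ + canInv R S M b ψ := by
  simp only [canInv, LinearMap.add_apply, TensorProduct.add_tmul, TensorProduct.tmul_add,
    Finset.sum_add_distrib]

lemma canInv_canMap {ι : Type*} [Fintype ι] (b : Module.Basis ι R S)
    (x : (S →ₗ[R] R) ⊗[S] (M ⊗[R] S)) : canInv R S M b (canMap R S M x) = x := by
  induction x using TensorProduct.induction_on with
  | zero => simp [canInv]
  | add x y hx hy => rw [map_add, canInv_add, hx, hy]
  | tmul α x =>
    induction x using TensorProduct.induction_on with
    | zero => simp [canInv]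
    | add x y hx hy => rw [TensorProduct.tmul_add, map_add, canInv_add, hx, hy]
    | tmul m t =>
      have key : ∀ i, (b.coord i) ⊗ₜ[S] ((α (b i * t) • m) ⊗ₜ[R] (1 : S))
          = (algebraMap R S (α (b i * t)) • b.coord i) ⊗ₜ[S] (m ⊗ₜ[R] (1 : S)) := by
        intro i
        rw [TensorProduct.smul_tmul, TensorProduct.smul_tmul, tensorRight_smul_tmul,
          Algebra.smul_def]
      simp only [canInv, canMap_tmul, key]
      rw [← TensorProduct.sum_tmul]
      have h : ∑ i, algebraMap R S (α (b i * t)) • b.coord i = t • α := by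
        ext s
        rw [LinearMap.sum_apply, homDom_smul_apply]
        conv_rhs => rw [← b.sum_repr s, Finset.mul_sum, map_sum]
        refine Finset.sum_congr rfl fun i _ => ?_
        rw [homDom_smul_apply, ← Algebra.smul_def, map_smul, mul_smul_comm, map_smul,
          mul_comm t, smul_eq_mul, smul_eq_mul, mul_comm, Module.Basis.coord_apply]
      rw [h, TensorProduct.smul_tmul, tensorRight_smul_tmul, mul_one]

lemma canMap_canInv {ι : Type*} [Fintype ι] (b : Module.Basis ι R S) (φ : S →ₗ[R] M) :
    canMap R S M (canInv R S M b φ) = φ := by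
  ext s
  rw [canInv, map_sum, LinearMap.sum_apply]
  conv_rhs => rw [← b.sum_repr s, map_sum]
  refine Finset.sum_congr rfl fun i _ => ?_
  rw [canMap_tmul, mul_one, map_smul, Module.Basis.coord_apply]

end Helpers

/-- Let `S` be a commutative `R`-algebra which is finite and free as an `R`-module.  For every
`R`-module `M`, the map `can : Hom_R(S, R) ⊗_S (M ⊗_R S) → Hom_R(S, M)` with
`can (α ⊗ (m ⊗ t)) = (s ↦ α (s * t) • m)` is a well-defined isomorphism of `S`-modules. -/
theorem can_iso_of_finite_free
    (R S : Type*) [CommRing R] [CommRing S] [Algebra R S]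
    [Module.Finite R S] [Module.Free R S]
    (M : Type*) [AddCommGroup M] [Module R M] :
    ∃ e : ((S →ₗ[R] R) ⊗[S] (M ⊗[R] S)) ≃ₗ[S] (S →ₗ[R] M),
      ∀ (α : S →ₗ[R] R) (m : M) (t : S) (s : S),
        e (α ⊗ₜ[S] (m ⊗ₜ[R] t)) s = α (s * t) • m := by
  let b := Module.Free.chooseBasis R S
  exact ⟨{ canMap R S M with
      invFun := canInv R S M b
      left_inv := canInv_canMap R S M b
      right_inv := canMap_canInv R S M b }, fun α m t s => canMap_tmul R S M α m t s⟩
end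

section
/- Let R be a commutative ring, let f_1, …, f_n ∈ R be a regular sequence (for each i, f_i is a nonzerodivisor on R/(f_1,…,f_{i−1}), and the ideal (f_1,…,f_n) is proper), and let I = (f_1,…,f_n). Then for every R-module M there is an isomorphism of R-modules Ext^n_R(R/I, M) ≅ M/IM. -/
open CategoryTheory

universe u
/-- A finite free-type resolution of `R ⧸ I` of length `n` in unbundled form, shifted by one
(`L 0 = 0` and `L (i + 1)` is the `i`-th term), together with the information on the top
differential which is needed to compute `Ext^n`. -/
structure KosRes (R : Type u) [CommRing R] (I : Ideal R) (n : ℕ) where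
  L : ℕ → ModuleCat.{u} R
  d : ∀ i, L (i + 1) →ₗ[R] L i
  aug : L 1 →ₗ[R] R
  proj : ∀ i, Module.Projective R (L i)
  sub0 : Subsingleton (L 0)
  augsurj : Function.Surjective aug
  augd : ∀ y, aug y ∈ I ↔ ∃ x, d 1 x = y
  dd : ∀ i x, d i (d (i + 1) x) = 0
  ex : ∀ i y, d (i + 1) y = 0 → ∃ x, d (i + 2) x = y
  subtop : ∀ i, n + 2 ≤ i → Subsingleton (L i)
  e : L (n + 1) ≃ₗ[R] R
  bd : ∀ (M : Type u) [AddCommGroup M] [Module R M] (m : M),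
    m ∈ (I • (⊤ : Submodule R M)) ↔ ∃ φ : L n →ₗ[R] M, φ (d n (e.symm 1)) = m

namespace KosRes

variable {R : Type u} [CommRing R]

/-- Terms of the base resolution. -/
def baseL (R : Type u) [CommRing R] : ℕ → ModuleCat.{u} R
  | 1 => ModuleCat.of R R
  | _ => ModuleCat.of R PUnit.{u+1}

/-- The resolution of `R ⧸ ⊥`. -/
def base (R : Type u) [CommRing R] : KosRes R ⊥ 0 where
  L := baseL R
  d _ := 0
  aug := (LinearMap.id : R →ₗ[R] R)
  proj i := by
    match i with
    | 0 => exact inferInstanceAs (Module.Projective R PUnit.{u+1})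
    | 1 => exact inferInstanceAs (Module.Projective R R)
    | _ + 2 => exact inferInstanceAs (Module.Projective R PUnit.{u+1})
  sub0 := inferInstanceAs (Subsingleton PUnit.{u+1})
  augsurj := Function.surjective_id
  augd y := by
    rw [Ideal.mem_bot]
    exact ⟨fun h => ⟨0, h.symm⟩, fun ⟨_, h⟩ => h.symm⟩
  dd _ _ := rfl
  ex i y _ := ⟨0, Subsingleton.elim (α := PUnit.{u+1}) _ _⟩
  subtop i hi := by
    obtain ⟨i, rfl⟩ : ∃ j, i = j + 2 := ⟨i - 2, by omega⟩
    exact inferInstanceAs (Subsingleton PUnit.{u+1})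
  e := LinearEquiv.refl R R
  bd M _ _ m := by
    simp only [Submodule.bot_smul, Submodule.mem_bot, LinearMap.zero_apply, map_zero]
    exact ⟨fun h => ⟨0, h.symm⟩, fun ⟨_, h⟩ => h.symm⟩

variable {J : Ideal R} {n : ℕ} (K : KosRes R J n) (a : R)

/-- Terms of the cone. -/
def coneL : ℕ → ModuleCat.{u} R
  | 0 => ModuleCat.of R PUnit.{u+1}
  | i + 1 => ModuleCat.of R (K.L (i + 1) × K.L i)

/-- Differentials of the cone. -/
def coneD : ∀ i, K.coneL (i + 1) →ₗ[R] K.coneL i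
  | 0 => 0
  | i + 1 => LinearMap.prod
      ((K.d (i + 1)).comp (LinearMap.fst R (K.L (i + 2)) (K.L (i + 1)))
        + a • LinearMap.snd R (K.L (i + 2)) (K.L (i + 1)))
      (-((K.d i).comp (LinearMap.snd R (K.L (i + 2)) (K.L (i + 1)))))

lemma coneD_succ (i : ℕ) (x : K.L (i + 2)) (y : K.L (i + 1)) :
    K.coneD a (i + 1) (x, y) = ((K.d (i + 1) x + a • y, - K.d i y) : K.L (i + 1) × K.L i) := rfl

/-- The cone of multiplication by `a`. -/
noncomputable def cone (ha : ∀ r, a * r ∈ J → r ∈ J) :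
    KosRes R (J ⊔ Ideal.span {a}) (n + 1) where
  L := K.coneL
  d := K.coneD a
  aug := K.aug.comp (LinearMap.fst R (K.L 1) (K.L 0))
  proj i := by
    have := K.proj
    match i with
    | 0 => exact inferInstanceAs (Module.Projective R PUnit.{u+1})
    | i + 1 => exact inferInstanceAs (Module.Projective R (K.L (i + 1) × K.L i))
  sub0 := inferInstanceAs (Subsingleton PUnit.{u+1})
  augsurj := K.augsurj.comp Prod.fst_surjective
  augd := by
    have := K.sub0
    rintro ⟨x, y⟩
    change K.aug x ∈ _ ↔ _
    constructor
    · intro h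
      obtain ⟨j, hj, s, hs, hjs⟩ := Submodule.mem_sup.1 h
      obtain ⟨r, rfl⟩ := Ideal.mem_span_singleton'.1 hs
      obtain ⟨q, rfl⟩ := K.augsurj r
      have h1 : K.aug (x - a • q) ∈ J := by
        rw [map_sub, map_smul, ← hjs, smul_eq_mul, mul_comm a, add_sub_cancel_right]
        exact hj
      obtain ⟨p, hp⟩ := (K.augd _).1 h1
      refine ⟨((p, q) : K.L 2 × K.L 1), ?_⟩
      rw [coneD_succ]
      exact Prod.ext (by simp [hp]) (Subsingleton.elim _ _)
    · rintro ⟨⟨p, q⟩, h⟩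
      rw [coneD_succ] at h
      have h1 := congrArg (fun z : K.L 1 × K.L 0 => z.1) h
      dsimp only at h1
      rw [← h1, map_add, map_smul]
      exact Submodule.add_mem_sup ((K.augd _).2 ⟨p, rfl⟩)
        (Ideal.mul_mem_right _ _ (Ideal.mem_span_singleton_self a))
  dd i := by
    match i with
    | 0 => intro x; rfl
    | i + 1 =>
      rintro ⟨x, y⟩
      rw [coneD_succ]
      erw [coneD_succ]
      refine Prod.ext ?_ ?_
      · simp [K.dd]; rfl
      · simp [K.dd]; rfl
  ex i := by
    rintro ⟨x, y⟩ h
    rw [coneD_succ] at h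
    have h1 : K.d (i + 1) x + a • y = 0 := congrArg Prod.fst h
    have h2 : - K.d i y = 0 := congrArg Prod.snd h
    obtain ⟨z, rfl⟩ : ∃ z, K.d (i + 1) z = y := by
      match i with
      | 0 =>
        refine (K.augd _).1 (ha _ ?_)
        rw [← smul_eq_mul, ← map_smul]
        refine (K.augd _).2 ⟨-x, ?_⟩
        rw [map_neg]
        exact neg_eq_of_add_eq_zero_right h1
      | i + 1 => exact K.ex _ _ (neg_eq_zero.1 h2)
    rw [← map_smul, ← map_add] at h1
    obtain ⟨w, hw⟩ := K.ex _ _ h1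
    refine ⟨((w, -z) : K.L (i + 3) × K.L (i + 2)), ?_⟩
    rw [coneD_succ]
    exact Prod.ext (by simp [hw]) (by simp)
  subtop i hi := by
    obtain ⟨i, rfl⟩ : ∃ j, i = j + 1 := ⟨i - 1, by omega⟩
    have h1 := K.subtop i (by omega)
    have h2 := K.subtop (i + 1) (by omega)
    exact inferInstanceAs (Subsingleton (K.L (i + 1) × K.L i))
  e :=
    { LinearMap.comp K.e.toLinearMap (LinearMap.snd R (K.L (n + 2)) (K.L (n + 1))) with
      invFun := fun r => ((0, K.e.symm r) : K.L (n + 2) × K.L (n + 1))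
      left_inv := by
        have := K.subtop (n + 2) le_rfl
        rintro ⟨x, y⟩
        exact Prod.ext (Subsingleton.elim _ _) (by simp)
      right_inv := by
        intro r
        simp }
  bd M _ _ m := by
    rw [Submodule.sup_smul, Submodule.mem_sup, Submodule.ideal_span_singleton_smul]
    constructor
    · rintro ⟨y, hy, z, hz, rfl⟩
      obtain ⟨z, -, rfl⟩ := hz
      obtain ⟨β, rfl⟩ := (K.bd M y).1 hy
      let α : K.L (n + 1) →ₗ[R] M := (LinearMap.toSpanSingleton R M z).comp K.e.toLinearMap
      refine ⟨LinearMap.coprod (M := K.L (n + 1)) (M₂ := K.L n) α (-β), ?_⟩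
      change LinearMap.coprod (M := K.L (n + 1)) (M₂ := K.L n) α (-β)
        (K.d (n + 1) 0 + a • K.e.symm 1, - K.d n (K.e.symm 1)) = _
      simp [α, add_comm]
    · rintro ⟨φ, rfl⟩
      let ψ : K.L (n + 1) × K.L n →ₗ[R] M := φ
      refine ⟨_, (K.bd M _).2 ⟨-(ψ.comp (LinearMap.inr R _ _)), rfl⟩,
        a • ψ (K.e.symm 1, 0), ⟨_, trivial, rfl⟩, ?_⟩
      change _ = ψ (K.d (n + 1) 0 + a • K.e.symm 1, - K.d n (K.e.symm 1))
      rw [← map_smul]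
      simp only [LinearMap.neg_apply, LinearMap.comp_apply, LinearMap.inr_apply]
      rw [← map_neg, ← map_add]
      simp

end KosRes

namespace KosRes

variable {R : Type u} [CommRing R] {I : Ideal R} {n : ℕ} (K : KosRes R I n)

/-- The associated chain complex. -/
noncomputable def cplx : ChainComplex (ModuleCat.{u} R) ℕ :=
  ChainComplex.of (fun i => K.L (i + 1)) (fun i => ModuleCat.ofHom (K.d (i + 1)))
    (fun i => by ext x; exact K.dd _ x)

lemma cplx_d (i : ℕ) : K.cplx.d (i + 1) i = ModuleCat.ofHom (K.d (i + 1)) :=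
  ChainComplex.of_d (fun i => K.L (i + 1)) (fun i => ModuleCat.ofHom (K.d (i + 1))) i

/-- The augmentation. -/
noncomputable def eps : K.cplx.X 0 ⟶ ModuleCat.of R (R ⧸ I) :=
  ModuleCat.ofHom (Y := R ⧸ I) ((Submodule.mkQ I).comp K.aug)

lemma eps_eq_zero_iff (y : K.L 1) : K.eps.hom y = 0 ↔ K.aug y ∈ I :=
  Submodule.Quotient.mk_eq_zero I

lemma d_eps : K.cplx.d 1 0 ≫ K.eps = 0 := by
  rw [cplx_d]
  ext x
  exact (K.eps_eq_zero_iff _).2 ((K.augd _).2 ⟨x, rfl⟩)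

lemma exactAt_succ (i : ℕ) : K.cplx.ExactAt (i + 1) := by
  rw [HomologicalComplex.exactAt_iff' _ (i + 1 + 1) (i + 1) i (by simp) (by simp)]
  rw [ShortComplex.moduleCat_exact_iff]
  intro x hx
  change K.cplx.d (i + 1) i x = 0 at hx
  rw [cplx_d] at hx
  obtain ⟨y, hy⟩ := K.ex i x hx
  refine ⟨y, ?_⟩
  change K.cplx.d (i + 1 + 1) (i + 1) y = x
  rw [cplx_d]
  exact hy

/-- The associated projective resolution. -/
noncomputable def res : ProjectiveResolution (ModuleCat.of R (R ⧸ I)) where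
  complex := K.cplx
  projective i := (IsProjective.iff_projective (K.L (i + 1))).1 (K.proj (i + 1))
  π := (ChainComplex.toSingle₀Equiv _ _).symm ⟨K.eps, K.d_eps⟩
  quasiIso := ⟨fun i => by
    cases i
    · rw [ChainComplex.quasiIsoAt₀_iff, ShortComplex.quasiIso_iff_of_zeros']
      · refine (ShortComplex.exact_and_epi_g_iff_of_iso
          (S₂ := ShortComplex.mk (K.cplx.d 1 0) K.eps K.d_eps) ?_).2 ⟨?_, ?_⟩
        · exact ShortComplex.isoMk (Iso.refl _) (Iso.refl _) (Iso.refl _)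
            (by simp; exact (Category.id_comp _).trans (Category.comp_id _).symm)
            (by simp; exact (Category.id_comp _).trans (Category.comp_id _).symm)
        · rw [ShortComplex.moduleCat_exact_iff]
          intro x hx
          obtain ⟨y, hy⟩ := (K.augd x).1 ((K.eps_eq_zero_iff x).1 hx)
          refine ⟨y, ?_⟩
          change K.cplx.d 1 0 y = x
          rw [cplx_d]
          exact hy
        · change Epi K.eps
          rw [ModuleCat.epi_iff_surjective]
          exact (Submodule.mkQ_surjective I).comp K.augsurj
      all_goals rfl
    · rw [quasiIsoAt_iff_exactAt']
      · apply exactAt_succ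
      · apply ChainComplex.exactAt_succ_single_obj⟩

variable (M : Type u) [AddCommGroup M] [Module R M]

/-- Evaluation at the generator of the top term. -/
noncomputable def ev : (K.L (n + 1) ⟶ ModuleCat.of R M) ≃ₗ[R] M :=
  (ModuleCat.homLinearEquiv (S := R)).trans
    ((LinearEquiv.congrLeft M R K.e).trans (LinearMap.ringLmapEquivSelf R R M))

lemma ev_apply (φ : K.L (n + 1) ⟶ ModuleCat.of R M) : K.ev M φ = φ.hom (K.e.symm 1) := rfl

/-- The Hom complex. -/
noncomputable abbrev homC : CochainComplex (ModuleCat.{u} R) ℕ :=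
  K.cplx.linearYonedaObj R (ModuleCat.of R M)

lemma map_range : Submodule.map (K.ev M).toLinearMap
      (LinearMap.range ((K.homC M).sc n).f.hom) = I • (⊤ : Submodule R M) := by
  ext m
  rw [K.bd M m]
  change (∃ x ∈ LinearMap.range ((K.homC M).d ((ComplexShape.up ℕ).prev n) n).hom,
    K.ev M x = m) ↔ _
  cases n with
  | zero =>
    have := K.sub0
    have h0 : (K.homC M).d ((ComplexShape.up ℕ).prev 0) 0 = 0 :=
      HomologicalComplex.shape _ _ _ (by simp)
    rw [h0]
    constructor
    · rintro ⟨_, ⟨y, rfl⟩, rfl⟩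
      refine ⟨0, ?_⟩
      rw [LinearMap.zero_apply]
      exact (map_zero (K.ev M)).symm
    · rintro ⟨φ, rfl⟩
      refine ⟨0, ⟨0, rfl⟩, ?_⟩
      rw [Subsingleton.elim (K.d 0 (K.e.symm 1)) 0, map_zero]
      exact map_zero (K.ev M)
  | succ n =>
    have hp : (ComplexShape.up ℕ).prev (n + 1) = n := by simp
    rw [hp]
    constructor
    · rintro ⟨_, ⟨y, rfl⟩, rfl⟩
      let y' : K.L (n + 1) ⟶ ModuleCat.of R M := y
      refine ⟨y'.hom, ?_⟩
      change _ = K.ev M (K.cplx.d (n + 1) n ≫ y)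
      rw [cplx_d]
      rfl
    · rintro ⟨φ, rfl⟩
      refine ⟨_, ⟨ModuleCat.ofHom (Y := M) φ, rfl⟩, ?_⟩
      change K.ev M (K.cplx.d (n + 1) n ≫ ModuleCat.ofHom (Y := M) φ) = _
      rw [cplx_d]
      rfl

lemma g_zero : ((K.homC M).sc n).g = 0 := by
  have := K.subtop (n + 2) le_rfl
  have hp : (ComplexShape.up ℕ).next n = n + 1 := by simp
  change (K.homC M).d n ((ComplexShape.up ℕ).next n) = 0
  rw [hp]
  ext x : 2
  change (K.cplx.d (n + 1) n ≫ x : _) = 0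
  rw [cplx_d]
  ext y
  rw [Subsingleton.elim (α := K.L (n + 2)) y 0]
  let x' : K.L (n + 1) ⟶ ModuleCat.of R M := x
  change x'.hom (K.d (n + 1) 0) = 0
  rw [map_zero, map_zero]

/-- The main computation. -/
theorem main {R : Type u} [CommRing R] {I : Ideal R} {n : ℕ} (K : KosRes R I n)
    (M : Type u) [AddCommGroup M] [Module R M] : Nonempty ((((Ext R (ModuleCat.{u} R) n).obj
            (Opposite.op (ModuleCat.of R (R ⧸ I)))).obj (ModuleCat.of R M)) ≃ₗ[R]
        (M ⧸ (I • (⊤ : Submodule R M)))) := by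
  let i1 := (K.res.isoExt (R := R) n (ModuleCat.of R M)).toLinearEquiv
  let h := ShortComplex.LeftHomologyData.ofIsColimitCokernelCofork ((K.homC M).sc n)
    (K.g_zero M) _ (ModuleCat.cokernelIsColimit _)
  let i2 := h.homologyIso.toLinearEquiv
  exact ⟨i1.trans (i2.trans (Submodule.Quotient.equiv _ _ (K.ev M) (K.map_range M)))⟩

end KosRes

theorem exists_kosRes {R : Type u} [CommRing R] : ∀ {n : ℕ} (f : Fin n → R)
    (_ : ∀ i : Fin n, ∀ x : R ⧸ Ideal.span (f '' {j | j < i}), f i • x = 0 → x = 0),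
    Nonempty (KosRes R (Ideal.span (Set.range f)) n)
  | 0, f, _ => by
    have : Ideal.span (Set.range f) = ⊥ := by simp
    rw [this]
    exact ⟨KosRes.base R⟩
  | n + 1, f, h => by
    have him : ∀ i : Fin n, f '' {j | j < i.castSucc} = (fun j : Fin n => f j.castSucc) '' {j | j < i} := by
      intro i
      ext x
      constructor
      · rintro ⟨j, hj, rfl⟩
        have hj' : (j : ℕ) < i := hj
        exact ⟨⟨j, by omega⟩, hj', rfl⟩
      · rintro ⟨j, hj, rfl⟩
        exact ⟨j.castSucc, hj, rfl⟩
    have hlast : f '' {j | j < Fin.last n} = Set.range (fun j : Fin n => f j.castSucc) := by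
      ext x
      constructor
      · rintro ⟨j, hj, rfl⟩
        exact ⟨⟨j, hj⟩, rfl⟩
      · rintro ⟨j, rfl⟩
        exact ⟨j.castSucc, Fin.castSucc_lt_last j, rfl⟩
    obtain ⟨K⟩ := exists_kosRes (fun j : Fin n => f j.castSucc) (by
      intro i
      have := h i.castSucc
      rw [him] at this
      exact this)
    have hl := h (Fin.last n)
    rw [hlast] at hl
    have hI : Ideal.span (Set.range f) =
        Ideal.span (Set.range (fun j : Fin n => f j.castSucc)) ⊔ Ideal.span {f (Fin.last n)} := by
      rw [← Ideal.span_union]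
      congr 1
      ext x
      constructor
      · rintro ⟨j, rfl⟩
        induction j using Fin.lastCases with
        | last => exact Or.inr rfl
        | cast j => exact Or.inl ⟨j, rfl⟩
      · rintro (⟨j, rfl⟩ | rfl)
        · exact ⟨_, rfl⟩
        · exact ⟨_, rfl⟩
    rw [hI]
    refine ⟨K.cone _ fun r hr => ?_⟩
    exact Ideal.Quotient.eq_zero_iff_mem.1
      (hl (Ideal.Quotient.mk _ r) (Ideal.Quotient.eq_zero_iff_mem.2 hr))

open CategoryTheory

/-- If `f₁, …, fₙ` is a regular sequence in a commutative ring `R` (each `fᵢ` is a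
nonzerodivisor on `R/(f₁,…,f_{i-1})` and the ideal `(f₁,…,fₙ)` is proper), then for every
`R`-module `M` there is an isomorphism of `R`-modules `Extⁿ_R(R/I, M) ≅ M/IM`, where
`I = (f₁,…,fₙ)`. -/
theorem ext_of_regular_sequence_iso_quotient
    {R : Type u} [CommRing R] {n : ℕ} (f : Fin n → R)
    (hreg : ∀ i : Fin n, ∀ x : R ⧸ Ideal.span (f '' {j | j < i}), f i • x = 0 → x = 0)
    (hproper : Ideal.span (Set.range f) ≠ ⊤)
    (M : Type u) [AddCommGroup M] [Module R M] :
    Nonempty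
      ((((Ext R (ModuleCat.{u} R) n).obj
            (Opposite.op (ModuleCat.of R (R ⧸ Ideal.span (Set.range f))))).obj
          (ModuleCat.of R M)) ≃ₗ[R]
        (M ⧸ (Ideal.span (Set.range f) • (⊤ : Submodule R M)))) := by
  obtain ⟨K⟩ := exists_kosRes f hreg
  exact K.main M
end

section
/- Let p be a prime, let R be a commutative ring of characteristic p, and let (M, κ) be an R-module with a Cartier structure. Let f_1, …, f_n ∈ R and I = (f_1,…,f_n). Then for every m ∈ I·M one has κ((f_1⋯f_n)^{p−1} • m) ∈ I·M; consequently the formula κ̄(m + I·M) = κ((f_1⋯f_n)^{p−1} • m) + I·M defines an additive map κ̄ on M/IM satisfying κ̄(r^p • x) = r • κ̄(x) for all r ∈ R and x ∈ M/IM, i.e. a Cartier structure on the R/I-module M/IM. -/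
/-- Let `R` be a commutative ring of prime characteristic `p` and `(M, κ)` an `R`-module with a
Cartier structure (an additive map `κ` with `κ (r^p • m) = r • κ m`).  For `f₁, …, fₙ ∈ R` and
`I = (f₁, …, fₙ)`, the map `κ ((f₁⋯fₙ)^(p-1) • ·)` preserves `I·M`, and hence descends to a
Cartier structure on the `R/I`-module `M/IM`. -/
theorem cartier_structure_on_quotient
    (p : ℕ) (hp : p.Prime) (R : Type*) [CommRing R] [CharP R p]
    (M : Type*) [AddCommGroup M] [Module R M]
    (κ : M → M) (hadd : ∀ x y : M, κ (x + y) = κ x + κ y)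
    (hsemi : ∀ (r : R) (m : M), κ (r ^ p • m) = r • κ m)
    (n : ℕ) (f : Fin n → R) :
    (∀ m ∈ (Ideal.span (Set.range f) • ⊤ : Submodule R M),
        κ ((∏ i, f i) ^ (p - 1) • m) ∈ (Ideal.span (Set.range f) • ⊤ : Submodule R M)) ∧
    ∃ κ' : (M ⧸ (Ideal.span (Set.range f) • ⊤ : Submodule R M)) →
           (M ⧸ (Ideal.span (Set.range f) • ⊤ : Submodule R M)),
      (∀ x y, κ' (x + y) = κ' x + κ' y) ∧
      (∀ (r : R) (x : M ⧸ (Ideal.span (Set.range f) • ⊤ : Submodule R M)),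
        κ' (r ^ p • x) = r • κ' x) ∧
      (∀ m : M, κ' (Submodule.Quotient.mk m)
          = Submodule.Quotient.mk (κ ((∏ i, f i) ^ (p - 1) • m))) := by
  have key : ∀ m ∈ (Ideal.span (Set.range f) • ⊤ : Submodule R M),
      κ ((∏ i, f i) ^ (p - 1) • m) ∈ (Ideal.span (Set.range f) • ⊤ : Submodule R M) := by
    have hz : κ 0 = 0 := by simpa using hadd 0 0
    intro m hm
    refine Submodule.smul_induction_on hm ?_ ?_
    · intro r hr m _
      induction hr using Submodule.span_induction generalizing m with
      | mem x hx =>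
        obtain ⟨j, rfl⟩ := hx
        have h1 : (∏ i, f i) ^ (p - 1) • f j • m
            = f j ^ p • ((∏ i ∈ Finset.univ.erase j, f i) ^ (p - 1) • m) := by
          rw [← Finset.mul_prod_erase Finset.univ f (Finset.mem_univ j), smul_smul, smul_smul]
          congr 1
          obtain ⟨q, rfl⟩ : ∃ q, p = q + 1 := ⟨p - 1, by have := hp.pos; omega⟩
          simp only [Nat.add_sub_cancel]
          ring
        rw [h1, hsemi]
        exact Submodule.smul_mem_smul (Ideal.subset_span ⟨j, rfl⟩) trivial
      | zero => simp [hz]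
      | add x y _ _ hx hy =>
        rw [add_smul, smul_add, hadd]
        exact add_mem (hx m trivial) (hy m trivial)
      | smul a x _ hx =>
        have := hx (a • m) trivial
        rwa [smul_smul x a m, mul_comm x a] at this
    · intro x y hx hy
      rw [smul_add, hadd]
      exact add_mem hx hy
  refine ⟨key, ?_⟩
  have hsurj := Submodule.Quotient.mk_surjective
    (Ideal.span (Set.range f) • ⊤ : Submodule R M)
  let κ' : (M ⧸ (Ideal.span (Set.range f) • ⊤ : Submodule R M)) →
      (M ⧸ (Ideal.span (Set.range f) • ⊤ : Submodule R M)) := fun x =>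
    Submodule.Quotient.mk (κ ((∏ i, f i) ^ (p - 1) • Function.surjInv hsurj x))
  have hk : ∀ m : M, κ' (Submodule.Quotient.mk m)
      = Submodule.Quotient.mk (κ ((∏ i, f i) ^ (p - 1) • m)) := by
    intro m
    have h := Function.surjInv_eq hsurj (Submodule.Quotient.mk m)
    change Submodule.Quotient.mk _ = Submodule.Quotient.mk _
    generalize Function.surjInv hsurj (Submodule.Quotient.mk m) = m' at h ⊢
    rw [Submodule.Quotient.eq] at h ⊢
    have h2 := key _ h
    have h3 := hadd ((∏ i, f i) ^ (p - 1) • (m' - m)) ((∏ i, f i) ^ (p - 1) • m)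
    rw [← smul_add, sub_add_cancel] at h3
    rwa [h3, add_sub_cancel_right]
  refine ⟨κ', ?_, ?_, hk⟩
  · intro x y
    obtain ⟨x, rfl⟩ := hsurj x
    obtain ⟨y, rfl⟩ := hsurj y
    rw [← Submodule.Quotient.mk_add, hk, hk, hk, smul_add, hadd, Submodule.Quotient.mk_add]
  · intro r x
    obtain ⟨x, rfl⟩ := hsurj x
    rw [← Submodule.Quotient.mk_smul, hk, hk, smul_comm, hsemi, Submodule.Quotient.mk_smul]
end

section
/- Let k be a perfect field of characteristic p > 0, R = k[x_1,…,x_n], and let κ : R → R be the Cartier operator. Then for every additive map φ : R → R satisfying φ(f^p·g) = f·φ(g) for all f, g ∈ R, there exists a unique h ∈ R such that φ(g) = κ(h·g) for all g ∈ R. -/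
open MvPolynomial

namespace CartierAux

/-- every polynomial is a combination of small monomials with `p`-th power coefficients -/
lemma decomp (p : ℕ) (hp : p.Prime) (k : Type*) [Field k] [CharP k p] [PerfectField k] (n : ℕ)
    (f : MvPolynomial (Fin n) k) :
    ∃ c : (Fin n → Fin p) → MvPolynomial (Fin n) k,
      f = ∑ a, c a ^ p * ∏ i, X i ^ (a i : ℕ) := by
  have : Fact p.Prime := ⟨hp⟩
  have : ExpChar k p := ExpChar.prime hp
  have : PerfectRing k p := PerfectField.toPerfectRing p
  induction f using MvPolynomial.induction_on' with
  | monomial m s =>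
    obtain ⟨t, rfl⟩ := (PerfectRing.bijective_frobenius (R := k) (p := p)).2 s
    refine ⟨fun a => if a = fun i => ⟨m i % p, Nat.mod_lt _ hp.pos⟩ then
      C t * ∏ i, X i ^ (m i / p) else 0, ?_⟩
    rw [Finset.sum_eq_single (fun i => ⟨m i % p, Nat.mod_lt _ hp.pos⟩)]
    · beta_reduce
      rw [if_pos rfl, mul_pow, mul_assoc, ← Finset.prod_pow, ← Finset.prod_mul_distrib,
        MvPolynomial.monomial_eq, C_pow, Finsupp.prod_fintype _ _ (by simp)]
      congr 1
      refine Finset.prod_congr rfl fun i _ => ?_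
      rw [← pow_mul, ← pow_add, Nat.div_add_mod']
    · intro b _ hb
      beta_reduce
      rw [if_neg hb, zero_pow hp.ne_zero, zero_mul]
    · simp
  | add f g hf hg =>
    obtain ⟨c, hc⟩ := hf
    obtain ⟨d, hd⟩ := hg
    refine ⟨fun a => c a + d a, ?_⟩
    simp only [add_pow_char, add_mul, Finset.sum_add_distrib]
    rw [← hc, ← hd]

/-- duality of small monomials under the Cartier operator -/
lemma dual (p : ℕ) (hp : p.Prime) (k : Type*) [Field k] (n : ℕ)
    (κ : MvPolynomial (Fin n) k → MvPolynomial (Fin n) k)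
    (hsemi : ∀ f g, κ (f ^ p * g) = f * κ g)
    (hone : κ ((∏ i, X i) ^ (p - 1)) = 1)
    (hzero : ∀ a : Fin n → ℕ, (∀ i, a i ≤ p - 1) → a ≠ (fun _ => p - 1) →
      κ (∏ i, X i ^ a i) = 0) (a b : Fin n → Fin p) :
    κ ((∏ i, X i ^ (a i : ℕ)) * ∏ i, X i ^ (p - 1 - (b i : ℕ))) = if a = b then 1 else 0 := by
  rw [← Finset.prod_mul_distrib]
  simp only [← pow_add]
  split_ifs with h
  · subst h
    rw [← hone, ← Finset.prod_pow]
    congr 1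
    refine Finset.prod_congr rfl fun i _ => ?_
    congr 1
    have := (a i).2
    omega
  · have key : ∀ e : Fin n → ℕ, (∏ i, X i ^ e i : MvPolynomial (Fin n) k) =
        (∏ i, X i ^ (e i / p)) ^ p * ∏ i, X i ^ (e i % p) := by
      intro e
      rw [← Finset.prod_pow, ← Finset.prod_mul_distrib]
      refine Finset.prod_congr rfl fun i _ => ?_
      rw [← pow_mul, ← pow_add, Nat.div_add_mod']
    rw [key, hsemi, hzero, mul_zero]
    · intro i
      have := Nat.mod_lt ((a i : ℕ) + (p - 1 - (b i : ℕ))) hp.pos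
      omega
    · intro he
      apply h
      funext i
      have h1 := congrFun he i
      have ha := (a i).2
      have hb := (b i).2
      apply Fin.ext
      by_cases hlt : (a i : ℕ) + (p - 1 - (b i : ℕ)) < p
      · rw [Nat.mod_eq_of_lt hlt] at h1
        omega
      · rw [Nat.mod_eq_sub_mod (by omega), Nat.mod_eq_of_lt (by omega)] at h1
        omega

end CartierAux

/-- Let `κ` be the Cartier operator on `R = k[x₁,…,xₙ]` over a perfect field `k` of
characteristic `p > 0`.  Every additive map `φ : R → R` with `φ (f^p * g) = f * φ g` is of the
form `φ = κ (h * ·)` for a unique `h ∈ R`. -/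
theorem cartier_operator_generates
    (p : ℕ) (hp : p.Prime) (k : Type*) [Field k] [CharP k p] [PerfectField k] (n : ℕ)
    (κ : MvPolynomial (Fin n) k → MvPolynomial (Fin n) k)
    (hadd : ∀ f g, κ (f + g) = κ f + κ g)
    (hsemi : ∀ f g, κ (f ^ p * g) = f * κ g)
    (hone : κ ((∏ i, X i) ^ (p - 1)) = 1)
    (hzero : ∀ a : Fin n → ℕ, (∀ i, a i ≤ p - 1) → a ≠ (fun _ => p - 1) →
      κ (∏ i, X i ^ a i) = 0)
    (φ : MvPolynomial (Fin n) k → MvPolynomial (Fin n) k)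
    (hφa : ∀ f g, φ (f + g) = φ f + φ g)
    (hφs : ∀ f g, φ (f ^ p * g) = f * φ g) :
    ∃! h : MvPolynomial (Fin n) k, ∀ g, φ g = κ (h * g) := by
  have ksum : ∀ (F : (Fin n → Fin p) → MvPolynomial (Fin n) k), κ (∑ a, F a) = ∑ a, κ (F a) :=
    fun F => map_sum (AddMonoidHom.mk' κ hadd) F Finset.univ
  have psum : ∀ (F : (Fin n → Fin p) → MvPolynomial (Fin n) k), φ (∑ a, F a) = ∑ a, φ (F a) :=
    fun F => map_sum (AddMonoidHom.mk' φ hφa) F Finset.univ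
  have hdual := CartierAux.dual p hp k n κ hsemi hone hzero
  refine ⟨∑ a : Fin n → Fin p, φ (∏ i, X i ^ (a i : ℕ)) ^ p *
    ∏ i, X i ^ (p - 1 - (a i : ℕ)), ?_, ?_⟩
  · have hb : ∀ b : Fin n → Fin p, κ ((∑ a : Fin n → Fin p, φ (∏ i, X i ^ (a i : ℕ)) ^ p *
        ∏ i, X i ^ (p - 1 - (a i : ℕ))) * ∏ i, X i ^ (b i : ℕ)) = φ (∏ i, X i ^ (b i : ℕ)) := by
      intro b
      rw [Finset.sum_mul, ksum, Finset.sum_eq_single b]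
      · rw [mul_assoc, hsemi, mul_comm (∏ i, _ ^ (p - 1 - _)), hdual, if_pos rfl, mul_one]
      · intro a _ hab
        rw [mul_assoc, hsemi, mul_comm (∏ i, _ ^ (p - 1 - _)), hdual, if_neg (Ne.symm hab),
          mul_zero]
      · simp
    intro g
    obtain ⟨c, rfl⟩ := CartierAux.decomp p hp k n g
    rw [psum, Finset.mul_sum, ksum]
    refine Finset.sum_congr rfl fun b _ => ?_
    rw [hφs, mul_left_comm, hsemi, hb]
  · intro h' hh'
    obtain ⟨c, rfl⟩ := CartierAux.decomp p hp k n h'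
    have hc : ∀ b : Fin n → Fin p, φ (∏ i, X i ^ (p - 1 - (b i : ℕ))) = c b := by
      intro b
      rw [hh', Finset.sum_mul, ksum, Finset.sum_eq_single b]
      · rw [mul_assoc, hsemi, hdual, if_pos rfl, mul_one]
      · intro a _ hab
        rw [mul_assoc, hsemi, hdual, if_neg hab, mul_zero]
      · simp
    refine Fintype.sum_equiv (Equiv.piCongrRight fun _ => Fin.revPerm) _ _ fun b => ?_
    rw [← hc]
    have hb : ∀ i, p - (b i + 1) = p - 1 - (b i : ℕ) := fun i => by omega
    have hb2 : ∀ i, p - 1 - (p - 1 - (b i : ℕ)) = (b i : ℕ) := fun i => by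
      have := (b i).2
      omega
    simp [Fin.val_rev, hb, hb2]
end

section
/- Let p be a prime, R a commutative ring of characteristic p, ω an R-module equipped with a Cartier structure κ_ω, and N an arbitrary R-module. Then: (i) there is a well-defined additive map Φ : (F*N) ⊗_R ω → N ⊗_R ω determined by Φ((r ⊗ n) ⊗ x) = n ⊗ κ_ω(r • x); and (ii) for every R-linear map γ : N → F*N, the composite K = Φ ∘ (γ ⊗ id_ω) : N ⊗_R ω → N ⊗_R ω is a Cartier structure on N ⊗_R ω, i.e. K is additive and K(r^p • y) = r • K(y) for all r ∈ R and y ∈ N ⊗_R ω. -/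
open scoped TensorProduct

/-- The base ring for Frobenius base change: `R` itself, as the source of the Frobenius. -/
def FrobBase (_p : ℕ) (R : Type u) : Type u := R

instance (p : ℕ) (R : Type*) [CommRing R] : CommRing (FrobBase p R) :=
  inferInstanceAs (CommRing R)

section Frob

variable (p : ℕ) (R : Type*) [CommRing R] [Fact p.Prime] [CharP R p]

/-- The Frobenius ring endomorphism `r ↦ r ^ p` of `R`. -/
def frobPow : R →+* R where
  toFun r := r ^ p
  map_one' := one_pow p
  map_mul' a b := mul_pow a b p
  map_zero' := zero_pow (Fact.out (p := p.Prime)).ne_zero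
  map_add' a b := add_pow_char a b p

/-- The Frobenius, viewed as a ring homomorphism `FrobBase p R →+* R`. -/
def frobHom : FrobBase p R →+* R := frobPow p R

/-- `FrobBase p R` acts on `R` through the Frobenius:  `a • r = a ^ p * r`. -/
noncomputable instance : Module (FrobBase p R) R := Module.compHom R (frobHom p R)

noncomputable instance : SMulCommClass (FrobBase p R) R R where
  smul_comm a r x := by
    show frobHom p R a * (r * x) = r * (frobHom p R a * x)
    ring

/-- `N`, viewed as a module over `FrobBase p R` via the identity of `R`. -/
def FrobRes (_p : ℕ) (R : Type*) (N : Type u) : Type u := N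

instance (N : Type*) [AddCommGroup N] : AddCommGroup (FrobRes p R N) :=
  inferInstanceAs (AddCommGroup N)

noncomputable instance (N : Type*) [AddCommGroup N] [Module R N] :
    Module (FrobBase p R) (FrobRes p R N) :=
  inferInstanceAs (Module R N)

/-- The identity map `N → FrobRes p R N`. -/
def FrobRes.of {N : Type*} (p : ℕ) (R : Type*) (n : N) : FrobRes p R N := n

/-- The Frobenius pullback `F^*N = R ⊗_{F,R} N`: the base change of `N` along the Frobenius
`F : R → R`, an `R`-module through the left tensor factor, subject to the relation
`(r * a ^ p) ⊗ n = r ⊗ (a • n)`. -/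
noncomputable def FrobPull (N : Type*) [AddCommGroup N] [Module R N] : Type _ :=
  TensorProduct (FrobBase p R) R (FrobRes p R N)

noncomputable instance (N : Type*) [AddCommGroup N] [Module R N] :
    AddCommGroup (FrobPull p R N) :=
  inferInstanceAs (AddCommGroup (TensorProduct (FrobBase p R) R (FrobRes p R N)))

noncomputable instance (N : Type*) [AddCommGroup N] [Module R N] :
    Module R (FrobPull p R N) :=
  inferInstanceAs (Module R (TensorProduct (FrobBase p R) R (FrobRes p R N)))

/-- The elementary tensor `r ⊗ n` in the Frobenius pullback `F^*N`. -/
noncomputable def FrobPull.tmul {N : Type*} [AddCommGroup N] [Module R N] (r : R) (n : N) :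
    FrobPull p R N :=
  r ⊗ₜ[FrobBase p R] (FrobRes.of p R n)

/-- The additive map `x ↦ n ⊗ κ (r • x)`, additive in all three variables. -/
noncomputable def phiTri (ω : Type*) [AddCommGroup ω] [Module R ω] (κ : ω →+ ω)
    (N : Type*) [AddCommGroup N] [Module R N] :
    R →+ FrobRes p R N →+ ω →+ N ⊗[R] ω :=
  AddMonoidHom.mk' (fun r => AddMonoidHom.mk' (fun n => AddMonoidHom.mk'
    (fun x => TensorProduct.tmul R (show N from n) (κ (r • x)))
    (fun x y => by rw [smul_add, map_add, TensorProduct.tmul_add]))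
    (fun m n => by
      ext x
      exact TensorProduct.add_tmul (R := R) (show N from m) (show N from n) (κ (r • x))))
    (fun r s => by
      ext n x
      show TensorProduct.tmul R (show N from n) (κ ((r + s) • x)) =
        TensorProduct.tmul R (show N from n) (κ (r • x)) +
        TensorProduct.tmul R (show N from n) (κ (s • x))
      rw [add_smul, map_add, TensorProduct.tmul_add])

/-- The map `F^*N → Hom(ω, N ⊗ ω)`. -/
noncomputable def phiBi (ω : Type*) [AddCommGroup ω] [Module R ω] (κ : ω →+ ω)
    (hκ : ∀ (r : R) (x : ω), κ (r ^ p • x) = r • κ x)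
    (N : Type*) [AddCommGroup N] [Module R N] :
    FrobPull p R N →+ ω →+ N ⊗[R] ω :=
  TensorProduct.liftAddHom (R := FrobBase p R) (phiTri p R ω κ N) (fun a r n => by
    ext x
    show TensorProduct.tmul R (show N from n) (κ (((show R from a) ^ p * r) • x)) =
      TensorProduct.tmul R ((show R from a) • (show N from n)) (κ (r • x))
    rw [mul_smul, hκ, TensorProduct.smul_tmul])

theorem FrobPull.induction {N : Type*} [AddCommGroup N] [Module R N]
    {P : FrobPull p R N → Prop} (z : FrobPull p R N) (h0 : P 0)
    (ht : ∀ r n, P (FrobPull.tmul p R r n)) (ha : ∀ x y, P x → P y → P (x + y)) : P z :=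
  TensorProduct.induction_on (R := FrobBase p R) (M := R) (N := FrobRes p R N)
    (motive := P) z h0 ht ha

theorem FrobPull.smul_tmul_eq {N : Type*} [AddCommGroup N] [Module R N] (s r : R) (n : N) :
    s • FrobPull.tmul p R r n = FrobPull.tmul p R (s * r) n := rfl

/-- Let `R` be a commutative ring of prime characteristic `p`, `ω` an `R`-module with a
Cartier structure `κω`, and `N` an `R`-module.  Then (i) there is a well-defined additive map
`Φ : F^*N ⊗[R] ω → N ⊗[R] ω` determined by `Φ ((r ⊗ n) ⊗ x) = n ⊗ κω (r • x)`, and (ii) for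
every `R`-linear `γ : N → F^*N` the composite `K = Φ ∘ (γ ⊗ id)` is a Cartier structure on
`N ⊗[R] ω`. -/
theorem cartier_structure_from_gamma
    (p : ℕ) [Fact p.Prime] (R : Type*) [CommRing R] [CharP R p]
    (ω : Type*) [AddCommGroup ω] [Module R ω]
    (κω : ω → ω) (hκadd : ∀ x y : ω, κω (x + y) = κω x + κω y)
    (hκsemi : ∀ (r : R) (x : ω), κω (r ^ p • x) = r • κω x)
    (N : Type*) [AddCommGroup N] [Module R N] :
    (∃! Φ : FrobPull p R N ⊗[R] ω →+ N ⊗[R] ω,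
        ∀ (r : R) (n : N) (x : ω),
          Φ (FrobPull.tmul p R r n ⊗ₜ[R] x) = n ⊗ₜ[R] κω (r • x)) ∧
    (∀ Φ : FrobPull p R N ⊗[R] ω →+ N ⊗[R] ω,
        (∀ (r : R) (n : N) (x : ω),
          Φ (FrobPull.tmul p R r n ⊗ₜ[R] x) = n ⊗ₜ[R] κω (r • x)) →
        ∀ γ : N →ₗ[R] FrobPull p R N,
          (∀ y z : N ⊗[R] ω,
            Φ (TensorProduct.map γ LinearMap.id (y + z))
              = Φ (TensorProduct.map γ LinearMap.id y)
                + Φ (TensorProduct.map γ LinearMap.id z)) ∧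
          (∀ (r : R) (y : N ⊗[R] ω),
            Φ (TensorProduct.map γ LinearMap.id (r ^ p • y))
              = r • Φ (TensorProduct.map γ LinearMap.id y))) := by
  refine ⟨?_, ?_⟩
  · let κ : ω →+ ω := AddMonoidHom.mk' κω hκadd
    refine ⟨TensorProduct.liftAddHom (phiBi p R ω κ hκsemi N) ?_, ?_, ?_⟩
    · intro s z x
      induction z using FrobPull.induction with
      | h0 => rw [smul_zero, map_zero]; rfl
      | ht r n =>
        rw [FrobPull.smul_tmul_eq]
        show n ⊗ₜ[R] κω ((s * r) • x) = n ⊗ₜ[R] κω (r • s • x)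
        rw [smul_smul, mul_comm]
      | ha a b iha ihb =>
        rw [smul_add, map_add, map_add, AddMonoidHom.add_apply, AddMonoidHom.add_apply, iha, ihb]
    · intro r n x
      rfl
    · intro Ψ hΨ
      ext z
      induction z using TensorProduct.induction_on with
      | zero => rw [map_zero, map_zero]
      | add a b iha ihb => rw [map_add, map_add, iha, ihb]
      | tmul z x =>
        induction z using FrobPull.induction with
        | h0 => rw [TensorProduct.zero_tmul, map_zero, map_zero]
        | ht r n => rw [hΨ]; rfl
        | ha a b iha ihb => rw [TensorProduct.add_tmul, map_add, map_add, iha, ihb]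
  · intro Φ hΦ γ
    have key : ∀ (r : R) (w : FrobPull p R N ⊗[R] ω), Φ (r ^ p • w) = r • Φ w := by
      intro r w
      induction w using TensorProduct.induction_on with
      | zero => rw [smul_zero, map_zero, smul_zero]
      | add a b iha ihb => rw [smul_add, map_add, map_add, iha, ihb, smul_add]
      | tmul z x =>
        induction z using FrobPull.induction with
        | h0 => rw [TensorProduct.zero_tmul, smul_zero, map_zero, smul_zero]
        | ht s n =>
          rw [← TensorProduct.tmul_smul, hΦ, hΦ, smul_comm s, hκsemi, TensorProduct.tmul_smul]
        | ha a b iha ihb =>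
          rw [TensorProduct.add_tmul, smul_add, map_add, map_add, iha, ihb, smul_add]
    refine ⟨fun y z => by rw [map_add, map_add], fun r y => ?_⟩
    rw [map_smul, key]
end Frob
end

section
/- Let p be a prime and R a commutative ring of characteristic p such that F_*R (that is, R viewed as an R-module via r • s = r^p·s) is a finite free R-module. Let c : R → R be a Cartier structure on R with the property that for every additive map φ : R → R satisfying φ(r^p·s) = r·φ(s) there is a unique a ∈ R with φ(s) = c(a·s) for all s ∈ R. Then for all R-modules N and N′, the assignment γ ↦ C_{N′} ∘ γ defines a bijection from the set of R-linear maps N → F*N′ onto the set of additive maps κ : N → N′ satisfying κ(r^p • x) = r • κ(x) for all r ∈ R, x ∈ N. Moreover, for R-linear maps γ : N → F*N and γ′ : N′ → F*N′ and an R-linear map h : N → N′, one has (id_R ⊗ h) ∘ γ = γ′ ∘ h if and only if h ∘ (C_N ∘ γ) = (C_{N′} ∘ γ′) ∘ h. -/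
open scoped TensorProduct

section Frob

variable (p : ℕ) (R : Type*) [CommRing R] [Fact p.Prime] [CharP R p]

/-- `F_* R`: the ring `R` viewed as an `R`-module via `r • s = r ^ p * s`. -/
def FrobPush (_p : ℕ) (R : Type u) : Type u := R

instance : AddCommGroup (FrobPush p R) := inferInstanceAs (AddCommGroup R)

noncomputable instance : Module R (FrobPush p R) := Module.compHom R (frobPow p R)

/-- The identity map `R → F_* R`. -/
def FrobPush.of : R → FrobPush p R := fun r => r

/-- The identity map `F_* R → R`. -/
def FrobPush.un : FrobPush p R → R := fun r => r

noncomputable instance (N : Type*) [AddCommGroup N] [Module R N] :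
    Module (FrobBase p R) (FrobPull p R N) :=
  inferInstanceAs (Module (FrobBase p R) (TensorProduct (FrobBase p R) R (FrobRes p R N)))

/-- An `R`-linear map `h : N → N'`, viewed as `FrobBase p R`-linear between the restrictions. -/
noncomputable def FrobRes.map {N N' : Type*} [AddCommGroup N] [Module R N]
    [AddCommGroup N'] [Module R N'] (h : N →ₗ[R] N') :
    FrobRes p R N →ₗ[FrobBase p R] FrobRes p R N' where
  toFun n := FrobRes.of p R (h (n : N))
  map_add' x y := h.map_add x y
  map_smul' a x := h.map_smul (a : R) x

/-- Functoriality of the Frobenius pullback: `id_R ⊗ h : F^*N → F^*N'`. -/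
noncomputable def FrobPull.map {N N' : Type*} [AddCommGroup N] [Module R N]
    [AddCommGroup N'] [Module R N'] (h : N →ₗ[R] N') :
    FrobPull p R N →ₗ[FrobBase p R] FrobPull p R N' :=
  TensorProduct.map LinearMap.id (FrobRes.map p R h)


theorem FrobPull.ind {N : Type*} [AddCommGroup N] [Module R N] (P : FrobPull p R N → Prop)
    (h0 : P 0) (ht : ∀ r n, P (FrobPull.tmul p R r n)) (ha : ∀ x y, P x → P y → P (x + y))
    (t : FrobPull p R N) : P t :=
  TensorProduct.induction_on (motive := P) t h0 (fun r n => ht r n) (fun x y hx hy => ha x y hx hy)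

theorem FrobPull.tmul_add {N : Type*} [AddCommGroup N] [Module R N] (r : R) (m n : N) :
    FrobPull.tmul p R r (m + n) = FrobPull.tmul p R r m + FrobPull.tmul p R r n :=
  TensorProduct.tmul_add (R := FrobBase p R) r (FrobRes.of p R m) (FrobRes.of p R n)

theorem FrobPull.add_tmul {N : Type*} [AddCommGroup N] [Module R N] (r s : R) (n : N) :
    FrobPull.tmul p R (r + s) n = FrobPull.tmul p R r n + FrobPull.tmul p R s n :=
  TensorProduct.add_tmul (R := FrobBase p R) r s (FrobRes.of p R n)

theorem FrobPull.smul_tmul {N : Type*} [AddCommGroup N] [Module R N] (r s : R) (n : N) :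
    r • FrobPull.tmul p R s n = FrobPull.tmul p R (r * s) n :=
  TensorProduct.smul_tmul' (R := FrobBase p R) r s (FrobRes.of p R n)

theorem FrobPull.tmul_smul {N : Type*} [AddCommGroup N] [Module R N] (a r : R) (n : N) :
    FrobPull.tmul p R r (a • n) = FrobPull.tmul p R (a ^ p * r) n :=
  (TensorProduct.smul_tmul (R := FrobBase p R) (R' := FrobBase p R) (a : FrobBase p R) r
    (FrobRes.of p R n)).symm

theorem FrobPull.map_tmul {N N' : Type*} [AddCommGroup N] [Module R N]
    [AddCommGroup N'] [Module R N'] (h : N →ₗ[R] N') (r : R) (n : N) :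
    FrobPull.map p R h (FrobPull.tmul p R r n) = FrobPull.tmul p R r (h n) :=
  TensorProduct.map_tmul (R := FrobBase p R) _ _ _ _

theorem FrobPull.map_smul' {N N' : Type*} [AddCommGroup N] [Module R N]
    [AddCommGroup N'] [Module R N'] (h : N →ₗ[R] N') (r : R) (t : FrobPull p R N) :
    FrobPull.map p R h (r • t) = r • FrobPull.map p R h t := by
  induction t using FrobPull.ind with
  | h0 => simp
  | ht s n => rw [FrobPull.smul_tmul, FrobPull.map_tmul, FrobPull.map_tmul, FrobPull.smul_tmul]
  | ha x y hx hy => rw [smul_add, map_add, map_add, smul_add, hx, hy]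

/-- Dual bases of `F_* R` with respect to `c`. -/
theorem exists_dual_bases [Module.Finite R (FrobPush p R)] [Module.Free R (FrobPush p R)]
    (c : R → R) (hcadd : ∀ x y : R, c (x + y) = c x + c y)
    (hcsemi : ∀ r s : R, c (r ^ p * s) = r * c s)
    (hcgen : ∀ φ : R → R, (∀ x y, φ (x + y) = φ x + φ y) → (∀ r s, φ (r ^ p * s) = r * φ s) →
      ∃! a : R, ∀ s, φ s = c (a * s)) :
    ∃ (n : ℕ) (e f : Fin n → R), (∀ s, s = ∑ i, c (f i * s) ^ p * e i) ∧
      (∀ s, s = ∑ i, c (e i * s) ^ p * f i) := by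
  have h : ∃ (n : ℕ) (e : Fin n → R) (φ : Fin n → R → R),
      (∀ i x y, φ i (x + y) = φ i x + φ i y) ∧ (∀ i r s, φ i (r ^ p * s) = r * φ i s) ∧
      ∀ s, s = ∑ i, φ i s ^ p * e i := by
    have : Nontrivial R := CharP.nontrivial_of_char_ne_one (Fact.out (p := p.Prime)).ne_one
    have := Module.Finite.finite_basis (Module.Free.chooseBasis R (FrobPush p R))
    obtain ⟨n, ⟨eq⟩⟩ := Finite.exists_equiv_fin (Module.Free.ChooseBasisIndex R (FrobPush p R))
    let b := (Module.Free.chooseBasis R (FrobPush p R)).reindex eq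
    refine ⟨n, fun i => FrobPush.un p R (b i), fun i s => b.repr (FrobPush.of p R s) i, ?_, ?_, ?_⟩
    · intro i x y
      exact congrArg (fun g => g i) (b.repr.map_add (FrobPush.of p R x) (FrobPush.of p R y))
    · intro i r s
      exact congrArg (fun g => g i) (b.repr.map_smul r (FrobPush.of p R s))
    · intro s
      exact (b.sum_repr (FrobPush.of p R s)).symm
  obtain ⟨n, e, φ, h1, h2, h3⟩ := h
  choose f hf _ using fun i => hcgen (φ i) (h1 i) (h2 i)
  let cc : R →+ R := AddMonoidHom.mk' c hcadd
  have hs : ∀ g : Fin n → R, c (∑ i, g i) = ∑ i, c (g i) := fun g => map_sum cc g _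
  have key : ∀ s, s = ∑ i, c (f i * s) ^ p * e i := by
    intro s
    simpa only [hf] using h3 s
  refine ⟨n, e, f, key, fun s => ?_⟩
  refine (hcgen (fun t => c (s * t)) (fun x y => by rw [mul_add, hcadd])
    (fun r t => by rw [mul_left_comm, hcsemi])).unique (fun _ => rfl) (fun t => ?_)
  have e1 : c (s * t) = c (∑ i, c (f i * t) ^ p * (e i * s)) := by
    conv_lhs => rw [key t]
    rw [Finset.mul_sum]
    congr 1
    exact Finset.sum_congr rfl fun i _ => by ring
  show c (s * t) = _
  rw [e1, hs, Finset.sum_mul, hs]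
  refine Finset.sum_congr rfl fun i _ => ?_
  rw [hcsemi, mul_assoc, hcsemi, mul_comm]

/-- Let `R` be a commutative ring of prime characteristic `p` such that `F_* R` is finite free
over `R`, and let `c` be a Cartier structure on `R` such that every Frobenius-contracting
additive map `φ : R → R` equals `c (a * ·)` for a unique `a`.  Then for all `R`-modules
`N, N'`, composition with the contraction `C_{N'} : F^*N' → N'` is a bijection from the
`R`-linear maps `N → F^*N'` onto the Frobenius-contracting additive maps `N → N'`; moreover
for `γ : N → F^*N`, `γ' : N' → F^*N'` linear and `h : N → N'` linear one has
`(id ⊗ h) ∘ γ = γ' ∘ h` iff `h ∘ (C_N ∘ γ) = (C_{N'} ∘ γ') ∘ h`. -/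
theorem cartier_gamma_equivalence
    (p : ℕ) [Fact p.Prime] (R : Type*) [CommRing R] [CharP R p]
    [Module.Finite R (FrobPush p R)] [Module.Free R (FrobPush p R)]
    (c : R → R) (hcadd : ∀ x y : R, c (x + y) = c x + c y)
    (hcsemi : ∀ r s : R, c (r ^ p * s) = r * c s)
    (hcgen : ∀ φ : R → R, (∀ x y, φ (x + y) = φ x + φ y) → (∀ r s, φ (r ^ p * s) = r * φ s) →
      ∃! a : R, ∀ s, φ s = c (a * s))
    (N N' : Type*) [AddCommGroup N] [Module R N] [AddCommGroup N'] [Module R N']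
    (C : FrobPull p R N → N) (hCadd : ∀ x y, C (x + y) = C x + C y)
    (hC : ∀ (r : R) (n : N), C (FrobPull.tmul p R r n) = c r • n)
    (C' : FrobPull p R N' → N') (hC'add : ∀ x y, C' (x + y) = C' x + C' y)
    (hC' : ∀ (r : R) (n : N'), C' (FrobPull.tmul p R r n) = c r • n) :
    ((∀ γ : N →ₗ[R] FrobPull p R N', ∀ (r : R) (x : N), C' (γ (r ^ p • x)) = r • C' (γ x)) ∧
     (∀ κ : N → N', (∀ x y, κ (x + y) = κ x + κ y) →
        (∀ (r : R) (x : N), κ (r ^ p • x) = r • κ x) →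
        ∃! γ : N →ₗ[R] FrobPull p R N', ∀ x, C' (γ x) = κ x)) ∧
    (∀ (γ : N →ₗ[R] FrobPull p R N) (γ' : N' →ₗ[R] FrobPull p R N') (h : N →ₗ[R] N'),
      (∀ x, FrobPull.map p R h (γ x) = γ' (h x)) ↔ (∀ x, h (C (γ x)) = C' (γ' (h x)))) := by
  obtain ⟨n, e, f, hef, hfe⟩ := exists_dual_bases p R c hcadd hcsemi hcgen
  have C0 : C 0 = 0 := by simpa using hCadd 0 0
  have C'0 : C' 0 = 0 := by simpa using hC'add 0 0
  have C's : ∀ g : Fin n → FrobPull p R N', C' (∑ i, g i) = ∑ i, C' (g i) :=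
    fun g => map_sum (AddMonoidHom.mk' C' hC'add) g _
  have semi : ∀ (r : R) (t : FrobPull p R N'), C' (r ^ p • t) = r • C' t := by
    intro r t
    induction t using FrobPull.ind with
    | h0 => simp [C'0]
    | ht s m => rw [FrobPull.smul_tmul, hC', hC', hcsemi, mul_smul]
    | ha x y hx hy => rw [smul_add, hC'add, hC'add, smul_add, hx, hy]
  have tz : ∀ r : R, FrobPull.tmul p R r (0 : N') = 0 := fun r => by
    simpa using FrobPull.tmul_add p R r (0 : N') 0
  have expand : ∀ t : FrobPull p R N', t = ∑ i, FrobPull.tmul p R (f i) (C' (e i • t)) := by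
    intro t
    induction t using FrobPull.ind with
    | h0 => simp [C'0, tz]
    | ht s m =>
      have hsum : ∀ g : Fin n → R,
          FrobPull.tmul p R (∑ i, g i) m = ∑ i, FrobPull.tmul p R (g i) m := fun g =>
        map_sum (AddMonoidHom.mk' (fun r => FrobPull.tmul p R r m)
          (fun a b => FrobPull.add_tmul p R a b m)) g _
      conv_lhs => rw [hfe s]
      rw [hsum]
      refine Finset.sum_congr rfl fun i _ => ?_
      rw [FrobPull.smul_tmul, hC', FrobPull.tmul_smul]
    | ha x y hx hy =>
      conv_lhs => rw [hx, hy]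
      rw [← Finset.sum_add_distrib]
      refine Finset.sum_congr rfl fun i _ => ?_
      rw [smul_add, hC'add, FrobPull.tmul_add]
  have inj : ∀ t t' : FrobPull p R N', (∀ s : R, C' (s • t) = C' (s • t')) → t = t' := by
    intro t t' h
    rw [expand t, expand t']
    exact Finset.sum_congr rfl fun i _ => by rw [h]
  refine ⟨⟨fun γ r x => by rw [map_smul, semi], fun κ hκ hκs => ?_⟩, fun γ γ' h => ?_⟩
  · have κs : ∀ g : Fin n → N, κ (∑ i, g i) = ∑ i, κ (g i) :=
      fun g => map_sum (AddMonoidHom.mk' κ hκ) g _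
    have main : ∀ (s : R) (x : N),
        C' (s • ∑ i, FrobPull.tmul p R (f i) (κ (e i • x))) = κ (s • x) := by
      intro s x
      conv_rhs => rw [hef s, Finset.sum_smul, κs]
      rw [Finset.smul_sum, C's]
      refine Finset.sum_congr rfl fun i _ => ?_
      rw [FrobPull.smul_tmul, hC', mul_smul, hκs, mul_comm]
    refine ⟨{ toFun := fun x => ∑ i, FrobPull.tmul p R (f i) (κ (e i • x))
              map_add' := fun x y => ?_
              map_smul' := fun r x => ?_ }, fun x => ?_, fun δ hδ => ?_⟩
    · refine inj _ _ fun s => ?_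
      rw [smul_add, hC'add, main, main, main, smul_add, hκ]
    · refine inj _ _ fun s => ?_
      rw [RingHom.id_apply, smul_smul, main, main, smul_smul]
    · simpa using main 1 x
    · refine LinearMap.ext fun x => inj _ _ fun s => ?_
      rw [← map_smul, hδ]
      exact (main s x).symm
  · have nat : ∀ t, C' (FrobPull.map p R h t) = h (C t) := by
      intro t
      induction t using FrobPull.ind with
      | h0 => simp [C0, C'0]
      | ht s m => rw [FrobPull.map_tmul, hC, hC', map_smul]
      | ha x y hx hy => rw [map_add, hC'add, hCadd, map_add, hx, hy]
    refine ⟨fun H x => by rw [← nat, H], fun H x => inj _ _ fun s => ?_⟩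
    rw [← FrobPull.map_smul', ← map_smul, nat, H, map_smul, map_smul]
end Frob
end

section
/- Let p be a prime, R a commutative ring of characteristic p, (M, κ) an R-module with a Cartier structure, and T ⊆ R a multiplicative submonoid. Then there exists a unique Cartier structure κ_T on the localized T^{−1}R-module T^{−1}M (i.e. an additive map with κ_T(u^p • x) = u • κ_T(x) for all u ∈ T^{−1}R and x ∈ T^{−1}M) such that κ_T(m/1) = κ(m)/1 for all m ∈ M. It is given by κ_T(m/t) = κ(t^{p−1}·m)/t. Moreover, if κ is nilpotent, i.e. the e-fold composite κ^e is zero for some e, then κ_T^e = 0 as well. -/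
/-- Let `(M, κ)` be a Cartier module over a commutative ring `R` of prime characteristic `p`
and `T ⊆ R` a multiplicative submonoid.  There is a unique Cartier structure `κ_T` on the
localized `T⁻¹R`-module `T⁻¹M` with `κ_T (m/1) = κ m / 1`; it is given by
`κ_T (m/t) = κ (t^(p-1) • m) / t`, and if `κ^e = 0` then `κ_T^e = 0`. -/
theorem cartier_structure_localization
    (p : ℕ) (hp : p.Prime) (R : Type*) [CommRing R] [CharP R p]
    (M : Type*) [AddCommGroup M] [Module R M]
    (κ : M → M) (hadd : ∀ x y : M, κ (x + y) = κ x + κ y)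
    (hsemi : ∀ (r : R) (m : M), κ (r ^ p • m) = r • κ m)
    (T : Submonoid R) :
    (∃! κT : LocalizedModule T M → LocalizedModule T M,
        (∀ x y, κT (x + y) = κT x + κT y) ∧
        (∀ (u : Localization T) (x : LocalizedModule T M), κT (u ^ p • x) = u • κT x) ∧
        (∀ m : M, κT (LocalizedModule.mk m 1) = LocalizedModule.mk (κ m) 1)) ∧
    (∀ κT : LocalizedModule T M → LocalizedModule T M,
        (∀ x y, κT (x + y) = κT x + κT y) →
        (∀ (u : Localization T) (x : LocalizedModule T M), κT (u ^ p • x) = u • κT x) →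
        (∀ m : M, κT (LocalizedModule.mk m 1) = LocalizedModule.mk (κ m) 1) →
        (∀ (m : M) (t : T),
            κT (LocalizedModule.mk m t) = LocalizedModule.mk (κ ((t : R) ^ (p - 1) • m)) t) ∧
        (∀ e : ℕ, κ^[e] = 0 → κT^[e] = 0)) := by
  obtain ⟨n, rfl⟩ : ∃ n, p = n + 1 := ⟨p - 1, (Nat.succ_pred_eq_of_pos hp.pos).symm⟩
  simp only [Nat.add_sub_cancel]
  -- the explicit formula for any such structure
  have formula : ∀ κT : LocalizedModule T M → LocalizedModule T M,
      (∀ (u : Localization T) (x : LocalizedModule T M), κT (u ^ (n + 1) • x) = u • κT x) →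
      (∀ m : M, κT (LocalizedModule.mk m 1) = LocalizedModule.mk (κ m) 1) →
      ∀ (m : M) (t : T),
        κT (LocalizedModule.mk m t) = LocalizedModule.mk (κ ((t : R) ^ n • m)) t := by
    intro κT h2 h3 m t
    have e1 : LocalizedModule.mk m t =
        (Localization.mk (1 : R) t) ^ (n + 1) • LocalizedModule.mk ((t : R) ^ n • m) (1 : T) := by
      rw [Localization.mk_pow, LocalizedModule.mk_smul_mk, LocalizedModule.mk_eq]
      refine ⟨1, ?_⟩
      simp only [Submonoid.smul_def, smul_smul]
      congr 1
      push_cast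
      ring
    rw [e1, h2, h3, LocalizedModule.mk_smul_mk, one_smul, mul_one]
  refine ⟨?_, ?_⟩
  · let K : LocalizedModule T M → LocalizedModule T M := fun x =>
      LocalizedModule.liftOn x
        (fun a => LocalizedModule.mk (κ ((a.2 : R) ^ n • a.1)) a.2) (by
          rintro ⟨m, s⟩ ⟨m', s'⟩ h
          obtain ⟨u, hu⟩ := h
          rw [LocalizedModule.mk_eq]
          refine ⟨u, ?_⟩
          simp only [Submonoid.smul_def, smul_smul] at hu ⊢
          rw [← hsemi, ← hsemi, smul_smul, smul_smul]
          have a1 : ((u : R) * s') ^ (n + 1) * (s : R) ^ n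
              = ((u : R) * s' * s) ^ n * (u * s') := by ring
          have a2 : ((u : R) * s) ^ (n + 1) * (s' : R) ^ n
              = ((u : R) * s' * s) ^ n * (u * s) := by ring
          rw [a1, a2, mul_smul, mul_smul _ ((u : R) * s), hu])
    have hK : ∀ (m : M) (t : T),
        K (LocalizedModule.mk m t) = LocalizedModule.mk (κ ((t : R) ^ n • m)) t :=
      fun m t => LocalizedModule.liftOn_mk _ m t
    refine ⟨K, ⟨?_, ?_, ?_⟩, ?_⟩
    · intro x y
      induction x using LocalizedModule.induction_on with | _ m s
      induction y using LocalizedModule.induction_on with | _ m' s'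
      rw [LocalizedModule.mk_add_mk, hK, hK, hK, LocalizedModule.mk_add_mk]
      congr 1
      simp only [Submonoid.smul_def, smul_add, smul_smul, hadd]
      rw [← hsemi, ← hsemi, smul_smul, smul_smul]
      congr 3 <;> (push_cast; ring)
    · intro u x
      induction x using LocalizedModule.induction_on with | _ m t
      induction u using Localization.induction_on with | _ y
      obtain ⟨r, a⟩ := y
      rw [Localization.mk_pow, LocalizedModule.mk_smul_mk, hK, hK, LocalizedModule.mk_smul_mk]
      have a1 : (((a ^ (n + 1) * t : T) : R)) ^ n • r ^ (n + 1) • m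
          = ((a : R) ^ n * r) ^ (n + 1) • (t : R) ^ n • m := by
        simp only [smul_smul]
        congr 1
        push_cast
        ring
      rw [a1, hsemi, LocalizedModule.mk_eq]
      refine ⟨1, ?_⟩
      simp only [Submonoid.smul_def, smul_smul]
      congr 1
      push_cast
      ring
    · intro m
      rw [hK]
      simp
    · rintro K' ⟨-, h2, h3⟩
      funext x
      induction x using LocalizedModule.induction_on with | _ m t
      rw [hK, formula K' h2 h3]
  · intro κT _ h2 h3
    have hf := formula κT h2 h3
    refine ⟨hf, ?_⟩
    have hiter : ∀ (e : ℕ) (r : R) (m : M),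
        κ^[e] (r ^ ((n + 1) ^ e) • m) = r • κ^[e] m := by
      intro e
      induction e with
      | zero => intro r m; simp
      | succ e ih =>
        intro r m
        rw [Function.iterate_succ_apply, Function.iterate_succ_apply, pow_succ, pow_mul, hsemi, ih]
    have key : ∀ (e : ℕ) (m : M) (t : T), ∃ m' : M,
        κT^[e] (LocalizedModule.mk m t) = LocalizedModule.mk (κ^[e] m') t := by
      intro e m t
      induction e with
      | zero => exact ⟨m, rfl⟩
      | succ e ih =>
        obtain ⟨m', h⟩ := ih
        refine ⟨((t : R) ^ n) ^ ((n + 1) ^ e) • m', ?_⟩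
        rw [Function.iterate_succ_apply', h, hf, Function.iterate_succ_apply', hiter]
    intro e he
    funext x
    induction x using LocalizedModule.induction_on with | _ m t
    obtain ⟨m', h⟩ := key e m t
    rw [h, he]
    simp
end

section
/- Let p be a prime, R a commutative ring of characteristic p, S a commutative R-algebra, and (M, κ) an R-module with a Cartier structure. Endow Hom_R(S, M) with the S-module structure (s • φ)(t) = φ(s·t). Then the map κ^♭ : Hom_R(S, M) → Hom_R(S, M) defined by κ^♭(φ)(s) = κ(φ(s^p)) is well defined (i.e. κ^♭(φ) is again R-linear) and is a Cartier structure on the S-module Hom_R(S, M): it is additive and satisfies κ^♭(s^p • φ) = s • κ^♭(φ) for all s ∈ S. -/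
/-- Let `R` be a commutative ring of prime characteristic `p`, `S` a commutative `R`-algebra and
`(M, κ)` an `R`-module with a Cartier structure.  Then `κ♭ φ := κ ∘ φ ∘ (·^p)` is a well-defined
map on `Hom_R(S, M)` (i.e. `κ♭ φ` is again `R`-linear), it is additive, and it satisfies
`κ♭ (s^p • φ) = s • κ♭ φ` for the `S`-action `(s • φ) t = φ (s * t)`; that is, `κ♭` is a Cartier
structure on the `S`-module `Hom_R(S, M)`. -/
theorem cartier_structure_on_hom
    (p : ℕ) (hp : p.Prime) (R : Type*) [CommRing R] [CharP R p]
    (S : Type*) [CommRing S] [Algebra R S]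
    (M : Type*) [AddCommGroup M] [Module R M]
    (κ : M → M) (hadd : ∀ x y : M, κ (x + y) = κ x + κ y)
    (hsemi : ∀ (r : R) (m : M), κ (r ^ p • m) = r • κ m) :
    ∃ K : (S →ₗ[R] M) → (S →ₗ[R] M),
      (∀ (φ : S →ₗ[R] M) (s : S), K φ s = κ (φ (s ^ p))) ∧
      (∀ φ ψ : S →ₗ[R] M, K (φ + ψ) = K φ + K ψ) ∧
      (∀ (s : S) (φ : S →ₗ[R] M),
        K (φ ∘ₗ LinearMap.mul R S (s ^ p)) = (K φ) ∘ₗ LinearMap.mul R S s) := by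
  have hpS : (p : S) = 0 := by
    rw [← map_natCast (algebraMap R S) p, CharP.cast_eq_zero, map_zero]
  have hfrob : ∀ x y : S, (x + y) ^ p = x ^ p + y ^ p := by
    intro x y
    obtain ⟨r, hr⟩ := exists_add_pow_prime_eq hp x y
    rw [hr, hpS]
    ring
  refine ⟨fun φ =>
    { toFun := fun s => κ (φ (s ^ p))
      map_add' := fun x y => by rw [hfrob, map_add, hadd]
      map_smul' := fun r x => by rw [smul_pow, map_smul, hsemi, RingHom.id_apply] },
    fun φ s => rfl, ?_, ?_⟩
  · intro φ ψ
    ext s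
    exact hadd _ _
  · intro s φ
    ext t
    change κ (φ (s ^ p * t ^ p)) = κ (φ ((s * t) ^ p))
    rw [mul_pow]
end
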